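/- Let K be an (n_I + n_Γ) × (n_I + n_Γ) real matrix written in block form K = [[K_II, K_IΓ], [K_ΓI, K_ΓΓ]] with K_II invertible, let S = K_ΓΓ − K_ΓI K_II⁻¹ K_IΓ be invertible, and let P = [[K_II, K_IΓ], [0, S]]. Then the characteristic polynomial of K P⁻¹ is (X − 1)^(n_I + n_Γ); in particular every eigenvalue of the preconditioned matrix K P⁻¹ equals 1. -/

import Mathlib

open Matrix Polynomial

section

variable {l m n R : Type*} [DecidableEq m] [Fintype m] [CommRing R]

theorem fromBlocks_eq_lower_mul_upper_schur [DecidableEq l] [Fintype l]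
    {A : Matrix m m R} (hA : IsUnit A)
    (B : Matrix m n R) (C : Matrix l m R) (D : Matrix l n R) :
    fromBlocks A B C D =
      (fromBlocks 1 0 (C * A⁻¹) 1 : Matrix (m ⊕ l) (m ⊕ l) R) *
        fromBlocks A B 0 (D - C * A⁻¹ * B) := by
  have hCA : C * A⁻¹ * A = C :=
    nonsing_inv_mul_cancel_right A C ((isUnit_iff_isUnit_det A).mp hA)
  simp [fromBlocks_multiply, hCA]

variable [DecidableEq n] [Fintype n]

theorem fromBlocks_mul_inv_upper_schur
    {A : Matrix m m R} {B : Matrix m n R} {C : Matrix n m R} {D : Matrix n n R}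
    (hA : IsUnit A) (hS : IsUnit (D - C * A⁻¹ * B)) :
    fromBlocks A B C D * (fromBlocks A B 0 (D - C * A⁻¹ * B))⁻¹ =
      fromBlocks 1 0 (C * A⁻¹) 1 := by
  have hP : IsUnit (fromBlocks A B 0 (D - C * A⁻¹ * B)) :=
    isUnit_fromBlocks_zero₂₁.mpr ⟨hA, hS⟩
  rw [fromBlocks_eq_lower_mul_upper_schur hA B C D]
  exact mul_nonsing_inv_cancel_right _ _ ((isUnit_iff_isUnit_det _).mp hP)

theorem charpoly_fromBlocks_one_zero₁₂_one (C : Matrix n m R) :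
    (fromBlocks 1 0 C 1).charpoly = (X - 1) ^ (Fintype.card m + Fintype.card n) := by
  rw [charpoly_fromBlocks_zero₁₂, charpoly_one, charpoly_one, pow_add]

theorem charpoly_fromBlocks_mul_inv_upper_schur
    {A : Matrix m m R} {B : Matrix m n R} {C : Matrix n m R} {D : Matrix n n R}
    (hA : IsUnit A) (hS : IsUnit (D - C * A⁻¹ * B)) :
    (fromBlocks A B C D * (fromBlocks A B 0 (D - C * A⁻¹ * B))⁻¹).charpoly =
      (X - 1) ^ (Fintype.card m + Fintype.card n) := by
  rw [fromBlocks_mul_inv_upper_schur hA hS, charpoly_fromBlocks_one_zero₁₂_one]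

theorem eq_of_hasEigenvalue_of_charpoly_eq_X_sub_C_pow [IsDomain R]
    {A : Matrix m m R} {a μ : R} {k : ℕ} (hA : A.charpoly = (X - C a) ^ k)
    (hμ : Module.End.HasEigenvalue A.mulVecLin μ) : μ = a := by
  have hroot : A.charpoly.IsRoot μ := by
    rwa [Module.End.hasEigenvalue_iff_isRoot_charpoly, charpoly_mulVecLin] at hμ
  have hpow : (μ - a) ^ k = 0 := by
    simpa [hA, IsRoot.def] using hroot
  exact sub_eq_zero.mp (eq_zero_of_pow_eq_zero hpow)

theorem schur_preconditioned_charpoly_general [IsDomain R]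
    {A : Matrix m m R} {B : Matrix m n R} {C : Matrix n m R} {D : Matrix n n R}
    (hA : IsUnit A) (hS : IsUnit (D - C * A⁻¹ * B)) :
    (fromBlocks A B C D * (fromBlocks A B 0 (D - C * A⁻¹ * B))⁻¹).charpoly =
        (X - 1) ^ (Fintype.card m + Fintype.card n) ∧
      ∀ μ : R, Module.End.HasEigenvalue
        (fromBlocks A B C D * (fromBlocks A B 0 (D - C * A⁻¹ * B))⁻¹).mulVecLin μ → μ = 1 := by
  have hcharpoly := charpoly_fromBlocks_mul_inv_upper_schur hA hS
  refine ⟨hcharpoly, fun μ hμ => ?_⟩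
  rw [← Polynomial.C_1] at hcharpoly
  exact eq_of_hasEigenvalue_of_charpoly_eq_X_sub_C_pow hcharpoly hμ

end

/-- With the Schur-complement block upper-triangular preconditioner `P`,
the characteristic polynomial of `K * P⁻¹` is `(X − 1)^(n_I + n_Γ)`;
in particular every eigenvalue of the preconditioned matrix equals 1. -/
theorem schur_preconditioned_charpoly
    (nI nΓ : ℕ)
    (KII : Matrix (Fin nI) (Fin nI) ℝ) (KIΓ : Matrix (Fin nI) (Fin nΓ) ℝ)
    (KΓI : Matrix (Fin nΓ) (Fin nI) ℝ) (KΓΓ : Matrix (Fin nΓ) (Fin nΓ) ℝ)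
    (hKII : IsUnit KII)
    (S : Matrix (Fin nΓ) (Fin nΓ) ℝ)
    (hS : S = KΓΓ - KΓI * KII⁻¹ * KIΓ)
    (hSu : IsUnit S)
    (K : Matrix (Fin nI ⊕ Fin nΓ) (Fin nI ⊕ Fin nΓ) ℝ)
    (hK : K = fromBlocks KII KIΓ KΓI KΓΓ)
    (P : Matrix (Fin nI ⊕ Fin nΓ) (Fin nI ⊕ Fin nΓ) ℝ)
    (hP : P = fromBlocks KII KIΓ 0 S) :
    (K * P⁻¹).charpoly = (X - 1) ^ (nI + nΓ) ∧
      ∀ μ : ℝ, Module.End.HasEigenvalue (Matrix.mulVecLin (K * P⁻¹)) μ → μ = 1 := by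
  subst hS hK hP
  simpa only [Fintype.card_fin] using schur_preconditioned_charpoly_general hKII hSu
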